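/- arXiv:1202.0364 — 5 statements merged into one kernel-verified Lean document; each statement's English description precedes it below -/
import Mathlib

section
/- A finite simple graph G is a cograph (i.e., G has no induced subgraph isomorphic to the path P4 on four vertices) if and only if every induced subgraph H of G with at least two vertices satisfies: H is disconnected or the complement of H is disconnected. -/
/-- A graph is a cograph if it has no induced subgraph isomorphic to `P₄`,
the path on four vertices. Graph embeddings capture induced subgraphs. -/
def IsCograph {V : Type*} (G : SimpleGraph V) : Prop :=
  IsEmpty (SimpleGraph.pathGraph 4 ↪g G)

namespace SimpleGraph

variable {V : Type*} {G : SimpleGraph V}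

theorem isCograph_iff_forall_adj :
    IsCograph G ↔ ∀ a b c d : V, G.Adj a b → G.Adj b c → G.Adj c d →
      ¬ G.Adj a c → ¬ G.Adj b d → G.Adj a d := by
  constructor
  · intro h a b c d hab hbc hcd hac hbd
    by_contra had
    have hinj : Function.Injective ![a, b, c, d] := by
      intro i j hij
      fin_cases i <;> fin_cases j <;> simp at hij ⊢ <;> subst hij <;>
        simp_all [G.adj_comm]
    refine h.false ⟨⟨![a, b, c, d], hinj⟩, ?_⟩
    intro i j
    fin_cases i <;> fin_cases j <;> simp_all [pathGraph_adj, G.adj_comm]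
  · refine fun h => ⟨fun f => ?_⟩
    have key := h (f 0) (f 1) (f 2) (f 3)
    simp [pathGraph_adj] at key

theorem _root_.IsCograph.compl (h : IsCograph G) : IsCograph Gᶜ := by
  rw [isCograph_iff_forall_adj] at h ⊢
  intro a b c d hab hbc hcd hac hbd
  have := h c a d b
  grind [compl_adj, adj_comm]

/-- `G.SplitsOn s` means that `s` has a partition into two nonempty parts with no edge of `G`
between them. -/
def SplitsOn (G : SimpleGraph V) (s : Set V) : Prop :=
  ∃ p : V → Prop, (∃ a ∈ s, p a) ∧ (∃ b ∈ s, ¬ p b) ∧ ∀ a ∈ s, ∀ b ∈ s, p a → ¬ p b → ¬ G.Adj a b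

theorem SplitsOn.not_connected {s : Set V} (h : G.SplitsOn s) : ¬ (G.induce s).Connected := by
  obtain ⟨p, ⟨a, ha, hpa⟩, ⟨b, hb, hpb⟩, h⟩ := h
  intro hc
  obtain ⟨w⟩ := hc.preconnected ⟨a, ha⟩ ⟨b, hb⟩
  obtain ⟨d, -, hd, hd'⟩ := w.exists_boundary_dart {x | p x} hpa hpb
  exact h _ d.fst.2 _ d.snd.2 hd hd' d.adj

theorem SplitsOn.insert (hG : IsCograph G) {t : Set V} (h : G.SplitsOn t) (v : V) (hv : v ∉ t) :
    G.SplitsOn (insert v t) ∨ Gᶜ.SplitsOn (insert v t) := by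
  rw [isCograph_iff_forall_adj] at hG
  obtain ⟨p, ⟨a, ha, hpa⟩, ⟨b, hb, hpb⟩, h⟩ := h
  by_cases hw : ∃ w ∈ t, ¬ G.Adj v w
  · left
    obtain ⟨w, hwt, hw⟩ := hw
    -- By symmetry between the two parts, `w` lies in the part described by `q`.
    obtain ⟨q, hqw, ⟨c, hc, hqc⟩, hq⟩ : ∃ q : V → Prop, q w ∧ (∃ c ∈ t, ¬ q c) ∧
        ∀ x ∈ t, ∀ y ∈ t, q x → ¬ q y → ¬ G.Adj x y := by
      by_cases hpw : p w
      · exact ⟨p, hpw, ⟨b, hb, hpb⟩, h⟩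
      · exact ⟨fun x => ¬ p x, hpw, ⟨a, ha, not_not.2 hpa⟩,
          fun x hx y hy hpx hpy hxy => h y hy x hx (not_not.1 hpy) hpx hxy.symm⟩
    by_cases hz : ∃ z ∈ t, ¬ q z ∧ G.Adj v z
    · obtain ⟨z, hzt, hqz, hvz⟩ := hz
      refine ⟨fun x => x ∈ t ∧ q x ∧ ¬ G.Adj v x, ⟨w, .inr hwt, hwt, hqw, hw⟩,
        ⟨v, .inl rfl, fun hv' => hv hv'.1⟩, ?_⟩
      rintro x - y hy ⟨hxt, hqx, hvx⟩ hny hxy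
      obtain rfl | hyt := hy
      · exact hvx hxy.symm
      by_cases hqy : q y
      · have hvy : G.Adj v y := by tauto
        exact hq x hxt z hzt hqx hqz <| hG x y v z hxy hvy.symm hvz (fun h => hvx h.symm)
          (hq y hyt z hzt hqy hqz)
      · exact hq x hxt y hyt hqx hqy hxy
    · push Not at hz
      refine ⟨fun x => x ∈ t ∧ ¬ q x, ⟨c, .inr hc, hc, hqc⟩, ⟨v, .inl rfl, fun hv' => hv hv'.1⟩, ?_⟩
      rintro x - y hy ⟨hxt, hqx⟩ hny hxy
      obtain rfl | hyt := hy
      · exact hz x hxt hqx hxy.symm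
      · exact hq y hyt x hxt (by tauto) hqx hxy.symm
  · right
    push Not at hw
    refine ⟨fun x => x = v, ⟨v, .inl rfl, rfl⟩, ⟨a, .inr ha, fun h => hv (h ▸ ha)⟩, ?_⟩
    rintro x - y hy rfl hyx hxy
    exact (compl_adj .. |>.1 hxy).2 (hw y (hy.resolve_left hyx))

theorem _root_.IsCograph.splitsOn_or_compl (hG : IsCograph G) {s : Set V} (hs : s.Finite)
    (hn : s.Nontrivial) : G.SplitsOn s ∨ Gᶜ.SplitsOn s := by
  induction s, hs using Set.Finite.induction_on with
  | empty => exact absurd hn Set.not_nontrivial_empty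
  | @insert v t hv ht ih =>
    obtain hsub | hnt := t.subsingleton_or_nontrivial
    · obtain ⟨w, hw, hwv⟩ := hn.exists_ne v
      have hwt : w ∈ t := hw.resolve_left hwv
      have hpart : ∀ H : SimpleGraph V, ¬ H.Adj v w → H.SplitsOn (insert v t) := by
        refine fun H hH => ⟨fun x => x = v, ⟨v, .inl rfl, rfl⟩, ⟨w, hw, hwv⟩, ?_⟩
        rintro x - y hy rfl hyx hxy
        exact hH (hsub (hy.resolve_left hyx) hwt ▸ hxy)
      by_cases hvw : G.Adj v w
      · exact .inr (hpart _ fun h => (compl_adj .. |>.1 h).2 hvw)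
      · exact .inl (hpart _ hvw)
    · obtain h | h := ih hnt
      · exact h.insert hG v hv
      · have := h.insert hG.compl v hv
        rwa [compl_compl, or_comm] at this

theorem Embedding.connected_induce_range_pathGraph_four (f : pathGraph 4 ↪g G) :
    (G.induce (Set.range f)).Connected := by
  let g : pathGraph 4 →g G.induce (Set.range f) :=
    ⟨fun i => ⟨f i, i, rfl⟩, fun h => f.map_adj_iff.2 h⟩
  refine (pathGraph_connected 3).map g ?_
  rintro ⟨_, i, rfl⟩
  exact ⟨i, rfl⟩

theorem Embedding.connected_compl_induce_range_pathGraph_four (f : pathGraph 4 ↪g G) :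
    ((G.induce (Set.range f))ᶜ).Connected := by
  let σ : Fin 4 → Fin 4 := ![1, 3, 0, 2]
  have hσ : ∀ i j, (pathGraph 4).Adj i j → σ i ≠ σ j ∧ ¬ (pathGraph 4).Adj (σ i) (σ j) := by
    simp only [pathGraph_adj]
    decide
  have hsurj : Function.Surjective σ := by decide
  let g : pathGraph 4 →g (G.induce (Set.range f))ᶜ :=
    ⟨fun i => ⟨f (σ i), σ i, rfl⟩, fun {i j} h => by
      simpa [compl_adj, -Subtype.mk.injEq, Subtype.ext_iff] using hσ i j h⟩
  refine (pathGraph_connected 3).map g ?_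
  rintro ⟨_, i, rfl⟩
  obtain ⟨j, rfl⟩ := hsurj i
  exact ⟨j, rfl⟩

end SimpleGraph

/-- A finite simple graph `G` is a cograph if and only if every induced subgraph of `G`
with at least two vertices is disconnected or has a disconnected complement. -/
theorem cograph_iff_disconnected_or_compl_disconnected
    {V : Type*} [Fintype V] (G : SimpleGraph V) :
    IsCograph G ↔
      ∀ s : Set V, s.Nontrivial →
        ¬ (G.induce s).Connected ∨ ¬ ((G.induce s)ᶜ).Connected := by
  constructor
  · intro hG s hs
    have hc : (G.induce s)ᶜ = Gᶜ.induce s := by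
      ext x y
      simp [Subtype.ext_iff]
    rw [hc]
    exact (hG.splitsOn_or_compl s.toFinite hs).imp
      SimpleGraph.SplitsOn.not_connected SimpleGraph.SplitsOn.not_connected
  · refine fun h => ⟨fun f => ?_⟩
    have hn : (Set.range f).Nontrivial :=
      ⟨f 0, ⟨0, rfl⟩, f 1, ⟨1, rfl⟩, fun h => by simpa using f.injective h⟩
    exact (h _ hn).elim (· f.connected_induce_range_pathGraph_four)
      (· f.connected_compl_induce_range_pathGraph_four)
end

section
/- A finite simple graph G is a cograph if and only if every induced subgraph G' of G with at least two vertices has a twin, that is, two distinct vertices x and y of G' whose neighborhoods in G' agree outside {x, y}: for every vertex z of G' with z ≠ x and z ≠ y, z is adjacent to x in G' exactly when z is adjacent to y in G'. -/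
namespace SimpleGraph

variable {V : Type*} {G : SimpleGraph V}

/-- `s` is the disjoint union of two nonempty sets between which either all edges or no edges
of `G` are present. -/
def IsSplit (G : SimpleGraph V) (s : Set V) : Prop :=
  ∃ A B : Set V, A.Nonempty ∧ B.Nonempty ∧ Disjoint A B ∧ A ∪ B = s ∧
    ∃ p : Prop, ∀ a ∈ A, ∀ b ∈ B, (G.Adj a b ↔ p)

theorem IsSplit.of_compl {s : Set V} (h : IsSplit Gᶜ s) : IsSplit G s := by
  obtain ⟨A, B, hA, hB, hAB, hs, p, hp⟩ := h
  refine ⟨A, B, hA, hB, hAB, hs, ¬ p, fun a ha b hb => ?_⟩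
  have hne : a ≠ b := hAB.ne_of_mem ha hb
  rw [← hp a ha b hb, compl_adj]
  tauto

/-- The vertices `a, b, c, d` of an induced path are automatically distinct. -/
theorem not_isCograph_of_adj {a b c d : V} (hab : G.Adj a b) (hbc : G.Adj b c) (hcd : G.Adj c d)
    (hac : ¬ G.Adj a c) (had : ¬ G.Adj a d) (hbd : ¬ G.Adj b d) : ¬ IsCograph G := by
  have hac' : a ≠ c := by rintro rfl; exact had hcd
  have had' : a ≠ d := by rintro rfl; exact hbd hab.symm
  have hbd' : b ≠ d := by rintro rfl; exact had hab
  refine fun h => h.false ⟨⟨![a, b, c, d], ?_⟩, ?_⟩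
  · intro i j
    fin_cases i <;> fin_cases j <;>
      simp [hab.ne, hab.ne', hbc.ne, hbc.ne', hcd.ne, hcd.ne', hac', hac'.symm, had', had'.symm,
        hbd', hbd'.symm]
  · intro i j
    change G.Adj (![a, b, c, d] i) (![a, b, c, d] j) ↔ _
    fin_cases i <;> fin_cases j <;>
      simp [pathGraph_adj, hab, hab.symm, hbc, hbc.symm, hcd, hcd.symm, hac, had, hbd,
        G.adj_comm c a, G.adj_comm d a, G.adj_comm d b]

theorem _root_.IsCograph.isSplit_insert_of_not_adj_left (h : IsCograph G) {A B : Set V} {u v : V}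
    (hB : B.Nonempty) (hAB : Disjoint A B) (hvA : v ∉ A) (hvB : v ∉ B)
    (hno : ∀ a ∈ A, ∀ b ∈ B, ¬ G.Adj a b) (hu : u ∈ A) (huv : ¬ G.Adj u v) :
    IsSplit G (insert v (A ∪ B)) := by
  rw [Set.disjoint_left] at hAB
  by_cases hx : ∃ x ∈ B, G.Adj v x
  · obtain ⟨x, hxB, hvx⟩ := hx
    refine ⟨{a ∈ A | ¬ G.Adj a v}, insert v ({a ∈ A | G.Adj a v} ∪ B), ⟨u, hu, huv⟩, ⟨v, by simp⟩,
      ?_, ?_, False, ?_⟩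
    · rw [Set.disjoint_left]
      rintro a ⟨haA, hav⟩ (rfl | ⟨-, h'⟩ | haB)
      exacts [hvA haA, hav h', hAB haA haB]
    · ext z
      simp only [Set.mem_union, Set.mem_insert_iff, Set.mem_ofPred_eq]
      tauto
    · rintro a ⟨haA, hav⟩ b (rfl | ⟨hbA, hbv⟩ | hbB)
      · simpa using hav
      · exact iff_false_intro fun hab =>
          not_isCograph_of_adj hab hbv hvx hav (hno a haA x hxB) (hno b hbA x hxB) h
      · simpa using hno a haA b hbB
  · push Not at hx
    refine ⟨insert v A, B, ⟨v, by simp⟩, hB, ?_, Set.insert_union .., False, ?_⟩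
    · rw [Set.disjoint_left]
      rintro a (rfl | haA)
      exacts [hvB, hAB haA]
    · rintro a (rfl | haA) b hbB
      · simpa using hx b hbB
      · simpa using hno a haA b hbB

theorem _root_.IsCograph.isSplit_insert_of_not_adj (h : IsCograph G) {A B : Set V} {v : V}
    (hA : A.Nonempty) (hB : B.Nonempty) (hAB : Disjoint A B) (hv : v ∉ A ∪ B)
    (hno : ∀ a ∈ A, ∀ b ∈ B, ¬ G.Adj a b) : IsSplit G (insert v (A ∪ B)) := by
  have hvA : v ∉ A := fun h' => hv (Or.inl h')
  have hvB : v ∉ B := fun h' => hv (Or.inr h')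
  by_cases hall : ∀ u ∈ A ∪ B, G.Adj v u
  · exact ⟨{v}, A ∪ B, ⟨v, rfl⟩, hA.inl, by simpa using hv, rfl, True, by simpa using hall⟩
  · push Not at hall
    obtain ⟨u, hu | hu, hvu⟩ := hall
    · exact h.isSplit_insert_of_not_adj_left hB hAB hvA hvB hno hu fun h' => hvu h'.symm
    · rw [Set.union_comm]
      exact h.isSplit_insert_of_not_adj_left hA hAB.symm hvB hvA
        (fun b hb a ha h' => hno a ha b hb h'.symm) hu fun h' => hvu h'.symm

/-- Every finite set of at least two vertices of a cograph induces a graph that is disconnected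
or has a disconnected complement. -/
theorem _root_.IsCograph.isSplit (h : IsCograph G) {s : Set V} (hs : s.Finite)
    (hnt : s.Nontrivial) : IsSplit G s := by
  induction s, hs using Set.Finite.induction_on with
  | empty => simp at hnt
  | @insert v s hv _ ih =>
    rcases s.subsingleton_or_nontrivial with hsub | hs
    · have hne : s.Nonempty := by
        rw [Set.nonempty_iff_ne_empty]
        rintro rfl
        simp at hnt
      obtain ⟨w, rfl⟩ := Set.exists_eq_singleton_iff_nonempty_subsingleton.2 ⟨hne, hsub⟩
      exact ⟨{v}, {w}, ⟨v, rfl⟩, ⟨w, rfl⟩, by simpa using hv, rfl, G.Adj v w, by simp⟩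
    · obtain ⟨A, B, hA, hB, hAB, rfl, p, hp⟩ := ih hs
      by_cases hpt : p
      · refine (h.compl.isSplit_insert_of_not_adj hA hB hAB hv fun a ha b hb => ?_).of_compl
        rw [compl_adj]
        exact fun h' => h'.2 ((hp a ha b hb).2 hpt)
      · exact h.isSplit_insert_of_not_adj hA hB hAB hv fun a ha b hb h' => hpt ((hp a ha b hb).1 h')

/-- Some two distinct vertices of `s` are twins in the subgraph of `G` induced by `s`. -/
def HasTwinsOn (G : SimpleGraph V) (s : Set V) : Prop :=
  ∃ x ∈ s, ∃ y ∈ s, x ≠ y ∧ ∀ z ∈ s, z ≠ x → z ≠ y → (G.Adj z x ↔ G.Adj z y)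

theorem HasTwinsOn.union {A B : Set V} {p : Prop} (h : HasTwinsOn G A)
    (hp : ∀ a ∈ A, ∀ b ∈ B, (G.Adj a b ↔ p)) : HasTwinsOn G (A ∪ B) := by
  obtain ⟨x, hx, y, hy, hxy, htwin⟩ := h
  refine ⟨x, Or.inl hx, y, Or.inl hy, hxy, ?_⟩
  rintro z (hz | hz) hzx hzy
  · exact htwin z hz hzx hzy
  · rw [G.adj_comm z x, G.adj_comm z y, hp x hx z hz, hp y hy z hz]

theorem _root_.IsCograph.hasTwinsOn (h : IsCograph G) {s : Set V} (hs : s.Finite)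
    (hnt : s.Nontrivial) : HasTwinsOn G s := by
  induction hn : s.ncard using Nat.strong_induction_on generalizing s with
  | _ n ih =>
    obtain ⟨A, B, hA, hB, hAB, rfl, p, hp⟩ := h.isSplit hs hnt
    have hAfin : A.Finite := hs.subset Set.subset_union_left
    have hBfin : B.Finite := hs.subset Set.subset_union_right
    have hcard := Set.ncard_union_eq hAB hAfin hBfin
    have hApos := (Set.ncard_pos hAfin).2 hA
    have hBpos := (Set.ncard_pos hBfin).2 hB
    rcases A.subsingleton_or_nontrivial with hA1 | hA2
    · rcases B.subsingleton_or_nontrivial with hB1 | hB2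
      · obtain ⟨a, ha⟩ := hA
        obtain ⟨b, hb⟩ := hB
        refine ⟨a, Or.inl ha, b, Or.inr hb, hAB.ne_of_mem ha hb, ?_⟩
        rintro z (hz | hz) hza hzb
        exacts [absurd (hA1 hz ha) hza, absurd (hB1 hz hb) hzb]
      · rw [Set.union_comm]
        exact (ih _ (by omega) hBfin hB2 rfl).union fun b hb a ha => by
          rw [G.adj_comm, hp a ha b hb]
    · exact (ih _ (by omega) hAfin hA2 rfl).union hp

end SimpleGraph

open SimpleGraph in
/-- A finite simple graph `G` is a cograph if and only if every induced subgraph of `G`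
with at least two vertices has a twin: two distinct vertices `x`, `y` such that every
other vertex is adjacent to `x` exactly when it is adjacent to `y`. -/
theorem cograph_iff_every_induced_subgraph_has_twin
    {V : Type*} [Fintype V] (G : SimpleGraph V) :
    IsCograph G ↔
      ∀ s : Set V, s.Nontrivial →
        ∃ x y : s, x ≠ y ∧
          ∀ z : s, z ≠ x → z ≠ y →
            ((G.induce s).Adj z x ↔ (G.induce s).Adj z y) := by
  constructor
  · intro h s hs
    obtain ⟨x, hx, y, hy, hxy, htwin⟩ := h.hasTwinsOn s.toFinite hs
    refine ⟨⟨x, hx⟩, ⟨y, hy⟩, by simpa using hxy, ?_⟩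
    rintro ⟨z, hz⟩ hzx hzy
    exact htwin z hz (by simpa using hzx) (by simpa using hzy)
  · refine fun h => ⟨fun f => ?_⟩
    obtain ⟨⟨_, i, rfl⟩, ⟨_, j, rfl⟩, hij, htwin⟩ :=
      h (Set.range f) ⟨f 0, ⟨0, rfl⟩, f 1, ⟨1, rfl⟩, f.injective.ne (by decide)⟩
    have key (k : Fin 4) (hki : k ≠ i) (hkj : k ≠ j) :
        (pathGraph 4).Adj k i ↔ (pathGraph 4).Adj k j := by
      simpa using htwin ⟨f k, k, rfl⟩ (by simpa [Subtype.ext_iff] using hki)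
        (by simpa [Subtype.ext_iff] using hkj)
    have hij' : i ≠ j := by rintro rfl; exact hij rfl
    simp only [pathGraph_adj] at key
    clear hij htwin
    revert i j
    decide
end

section
/- For every natural number k there exists a finite collection F of finite simple graphs such that a finite simple graph G is a k-probe cograph if and only if G contains no member of F as an induced subgraph. -/
/-- `G` is a `k`-probe cograph if there are `k` independent sets `N 0, …, N (k-1)` of `G`
and a cograph `H` on the same vertex set such that every edge of `G` is an edge of `H`
and every edge of `H` not in `G` has both endpoints in a common `N i`. -/
def IsKProbeCograph {V : Type*} (k : ℕ) (G : SimpleGraph V) : Prop :=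
  ∃ (N : Fin k → Set V) (H : SimpleGraph V),
    (∀ i : Fin k, ∀ x ∈ N i, ∀ y ∈ N i, ¬ G.Adj x y) ∧
    IsCograph H ∧
    (∀ x y, G.Adj x y → H.Adj x y) ∧
    (∀ x y, H.Adj x y → ¬ G.Adj x y → ∃ i : Fin k, x ∈ N i ∧ y ∈ N i)

namespace ProbeCograph

/-! ### Labelled cotrees and their well-quasi-ordering -/

/-- Binary cotrees whose leaves are labelled by `L`. An inner node with flag `true` stands for the
join of its two children, one with flag `false` for their disjoint union. -/
inductive Cotree (L : Type*) where
  | leaf (a : L) : Cotree L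
  | node (b : Bool) (t u : Cotree L) : Cotree L

namespace Cotree

variable {L : Type*}

/-- The homeomorphic embedding of cotrees preserving leaf labels and node flags. -/
inductive Emb : Cotree L → Cotree L → Prop
  | leaf (a : L) : Emb (leaf a) (leaf a)
  | left {s t : Cotree L} (b : Bool) (u : Cotree L) : Emb s t → Emb s (node b t u)
  | right {s u : Cotree L} (b : Bool) (t : Cotree L) : Emb s u → Emb s (node b t u)
  | node {t t' u u' : Cotree L} (b : Bool) :
      Emb t t' → Emb u u' → Emb (node b t u) (node b t' u')

theorem Emb.refl (t : Cotree L) : Emb t t := by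
  induction t with
  | leaf a => exact .leaf a
  | node b t u ht hu => exact .node b ht hu

theorem Emb.trans {s t u : Cotree L} (hst : Emb s t) (htu : Emb t u) : Emb s u := by
  induction htu generalizing s with
  | leaf a => exact hst
  | left b u _ ih => exact .left b u (ih hst)
  | right b t _ ih => exact .right b t (ih hst)
  | node b _ _ iht ihu =>
    cases hst with
    | left _ _ h => exact .left b _ (iht h)
    | right _ _ h => exact .right b _ (ihu h)
    | node _ h₁ h₂ => exact .node b (iht h₁) (ihu h₂)

instance : IsPreorder (Cotree L) Emb where
  refl := Emb.refl
  trans _ _ _ := Emb.trans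

/-- `s.IsChild t` says that `t` is an inner node with `s` as one of its two children. -/
def IsChild (s t : Cotree L) : Prop :=
  ∃ b u, t = node b s u ∨ t = node b u s

theorem IsChild.emb {s t : Cotree L} (h : s.IsChild t) : Emb s t := by
  obtain ⟨b, u, rfl | rfl⟩ := h
  · exact .left b u (.refl s)
  · exact .right b u (.refl s)

theorem IsChild.sizeOf_lt {s t : Cotree L} (h : s.IsChild t) : sizeOf s < sizeOf t := by
  obtain ⟨b, u, rfl | rfl⟩ := h <;> (simp only [node.sizeOf_spec]; omega)

/-- The children of the members of a minimal bad sequence are well-quasi-ordered. -/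
theorem partiallyWellOrderedOn_children {f : ℕ → Cotree L}
    (hf : Set.PartiallyWellOrderedOn.IsBadSeq Emb Set.univ f)
    (hmin : ∀ n, Set.PartiallyWellOrderedOn.IsMinBadSeq Emb sizeOf Set.univ n f) :
    {s : Cotree L | ∃ n, s.IsChild (f n)}.PartiallyWellOrderedOn Emb := by
  rw [Set.partiallyWellOrderedOn_iff_exists_lt]
  intro g hg
  by_contra! hbad
  choose φ hφ using hg
  obtain ⟨i₀, hi₀⟩ : ∃ i₀, ∀ i, φ i₀ ≤ φ i :=
    ⟨Function.argmin φ, fun i => Function.argmin_le φ i⟩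
  refine hmin (φ i₀) (fun n => if n < φ i₀ then f n else g (i₀ + (n - φ i₀)))
    (fun m hm => (if_pos hm).symm) ?_ ⟨fun _ => Set.mem_univ _, fun m n hmn => ?_⟩
  · simpa using (hφ i₀).sizeOf_lt
  · by_cases hn : n < φ i₀
    · simpa [hn, hmn.trans hn] using hf.2 m n hmn
    · by_cases hm : m < φ i₀
      · simp only [hm, hn, if_true, if_false]
        exact fun h => hf.2 m _ (hm.trans_le (hi₀ _)) (h.trans (hφ _).emb)
      · simp only [hm, hn, if_false]
        exact hbad _ _ (by omega)

/-- Kruskal's theorem for binary cotrees with leaf labels in a finite type. -/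
theorem wellQuasiOrdered_emb [Finite L] : WellQuasiOrdered (Emb (L := L)) := by
  rw [← Set.partiallyWellOrderedOn_univ_iff,
    Set.PartiallyWellOrderedOn.iff_not_exists_isMinBadSeq sizeOf]
  rintro ⟨f, hf, hmin⟩
  have hS := partiallyWellOrderedOn_children hf hmin
  set S := {s : Cotree L | ∃ n, s.IsChild (f n)}
  have hleaf : (leaf '' (Set.univ : Set L)).PartiallyWellOrderedOn Emb :=
    (Set.partiallyWellOrderedOn_of_wellQuasiOrdered
      (Finite.wellQuasiOrdered (Eq : L → L → Prop)) _).image_of_monotone_on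
      fun a _ _ _ h => h ▸ .leaf a
  have hnode (b : Bool) :
      ((fun p : Cotree L × Cotree L => node b p.1 p.2) '' S ×ˢ S).PartiallyWellOrderedOn Emb :=
    (hS.prod hS).image_of_monotone_on fun _ _ _ _ h => .node b h.1 h.2
  obtain ⟨m, n, hmn, h⟩ := (hleaf.union ((hnode true).union (hnode false))).exists_lt
    (f := f) fun n => by
      cases h : f n with
      | leaf a => exact .inl ⟨a, Set.mem_univ a, rfl⟩
      | node b t u =>
        have ht : t ∈ S := ⟨n, b, u, .inl h⟩
        have hu : u ∈ S := ⟨n, b, t, .inr h⟩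
        cases b
        · exact .inr (.inr ⟨(t, u), ⟨ht, hu⟩, rfl⟩)
        · exact .inr (.inl ⟨(t, u), ⟨ht, hu⟩, rfl⟩)
  exact hf.2 m n hmn h

/-- The cotree `t` describes the subgraph of `H` induced on `s`, with vertex labels `l`. -/
def Represents {V : Type*} [DecidableEq V] (H : SimpleGraph V) (l : V → L) :
    Cotree L → Finset V → Prop
  | leaf a, s => ∃ v, s = {v} ∧ l v = a
  | node b t u, s => ∃ A B, s = A ∪ B ∧ Disjoint A B ∧
      (∀ x ∈ A, ∀ y ∈ B, H.Adj x y ↔ b = true) ∧ t.Represents H l A ∧ u.Represents H l B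

/-- An embedding of cotrees yields an induced-subgraph embedding of the represented graphs. -/
theorem Emb.exists_map {V W : Type*} [DecidableEq V] [DecidableEq W]
    {H : SimpleGraph V} {K : SimpleGraph W} {l : V → L} {k : W → L} {t u : Cotree L}
    (h : Emb t u) {s : Finset V} {r : Finset W}
    (ht : t.Represents H l s) (hu : u.Represents K k r) :
    ∃ f : V → W, (∀ x ∈ s, f x ∈ r) ∧ (∀ x ∈ s, k (f x) = l x) ∧
      (∀ x ∈ s, ∀ y ∈ s, f x = f y → x = y) ∧
      ∀ x ∈ s, ∀ y ∈ s, K.Adj (f x) (f y) ↔ H.Adj x y := by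
  induction h generalizing s r with
  | leaf a =>
    obtain ⟨v, rfl, hv⟩ := ht
    obtain ⟨w, rfl, hw⟩ := hu
    exact ⟨fun _ => w, by simp [hv, hw]⟩
  | left b u _ ih =>
    obtain ⟨A, B, rfl, -, -, hA, -⟩ := hu
    obtain ⟨f, hf, hf'⟩ := ih ht hA
    exact ⟨f, fun x hx => Finset.mem_union_left _ (hf x hx), hf'⟩
  | right b t _ ih =>
    obtain ⟨A, B, rfl, -, -, -, hB⟩ := hu
    obtain ⟨f, hf, hf'⟩ := ih ht hB
    exact ⟨f, fun x hx => Finset.mem_union_right _ (hf x hx), hf'⟩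
  | node b _ _ iht ihu =>
    obtain ⟨A, B, rfl, hAB, hadj, hA, hB⟩ := ht
    obtain ⟨A', B', rfl, hAB', hadj', hA', hB'⟩ := hu
    obtain ⟨f, hf, hfl, hfi, hfa⟩ := iht hA hA'
    obtain ⟨g, hg, hgl, hgi, hga⟩ := ihu hB hB'
    have hBA : ∀ x ∈ B, x ∉ A := fun x hB hA => Finset.disjoint_left.1 hAB hA hB
    have hne : ∀ x ∈ A, ∀ y ∈ B, f x ≠ g y := fun x hx y hy e =>
      Finset.disjoint_left.1 hAB' (hf x hx) (e ▸ hg y hy)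
    have hc : ∀ x ∈ A, ∀ y ∈ B, (K.Adj (f x) (g y) ↔ H.Adj x y) := fun x hx y hy =>
      (hadj' _ (hf x hx) _ (hg y hy)).trans (hadj x hx y hy).symm
    refine ⟨fun x => if x ∈ A then f x else g x, fun x hx => ?_, fun x hx => ?_,
      fun x hx y hy => ?_, fun x hx y hy => ?_⟩
    · rcases Finset.mem_union.1 hx with hx | hx
      · simp [hx, hf x hx]
      · simp [hBA x hx, hg x hx]
    · rcases Finset.mem_union.1 hx with hx | hx
      · simp [hx, hfl x hx]
      · simp [hBA x hx, hgl x hx]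
    · rcases Finset.mem_union.1 hx with hx | hx <;> rcases Finset.mem_union.1 hy with hy | hy
      · simpa [hx, hy] using hfi x hx y hy
      · simpa [hx, hBA y hy] using fun e => absurd e (hne x hx y hy)
      · simpa [hy, hBA x hx] using fun e => absurd e.symm (hne y hy x hx)
      · simpa [hBA x hx, hBA y hy] using hgi x hx y hy
    · rcases Finset.mem_union.1 hx with hx | hx <;> rcases Finset.mem_union.1 hy with hy | hy
      · simpa [hx, hy] using hfa x hx y hy
      · simpa [hx, hBA y hy] using hc x hx y hy
      · simpa [hy, hBA x hx, K.adj_comm, H.adj_comm] using hc y hy x hx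
      · simpa [hBA x hx, hBA y hy] using hga x hx y hy

end Cotree

/-! ### Cographs have cotrees -/

section Decomposition

variable {V : Type*} {H : SimpleGraph V}

/-- Elementwise form of having no induced path on four vertices. -/
def PathFree (H : SimpleGraph V) : Prop :=
  ∀ a b c d, H.Adj a b → H.Adj b c → H.Adj c d →
    ¬ H.Adj a c → ¬ H.Adj a d → ¬ H.Adj b d → False

theorem _root_.IsCograph.pathFree (h : IsCograph H) : PathFree H := by
  intro a b c d hab hbc hcd hac had hbd
  have hba := hab.symm
  have hcb := hbc.symm
  have hdc := hcd.symm
  have hca : ¬ H.Adj c a := fun h => hac h.symm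
  have hda : ¬ H.Adj d a := fun h => had h.symm
  have hdb : ¬ H.Adj d b := fun h => hbd h.symm
  have nac : a ≠ c := by rintro rfl; exact had hcd
  have nad : a ≠ d := by rintro rfl; exact hbd hba
  have nbd : b ≠ d := by rintro rfl; exact had hab
  refine h.false ⟨⟨![a, b, c, d], fun i j => ?_⟩, fun {i j} => ?_⟩
  · fin_cases i <;> fin_cases j <;>
      simp [hab.ne, hab.ne', hbc.ne, hbc.ne', hcd.ne, hcd.ne', nac, nac.symm, nad, nad.symm,
        nbd, nbd.symm]
  · change H.Adj (![a, b, c, d] i) (![a, b, c, d] j) ↔ _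
    fin_cases i <;> fin_cases j <;>
      simp [SimpleGraph.pathGraph_adj, hab, hbc, hcd, hba, hcb, hdc, hac, had, hbd, hca, hda, hdb]

theorem PathFree.compl (h : PathFree H) : PathFree Hᶜ := by
  intro a b c d hab hbc hcd hac had hbd
  simp only [SimpleGraph.compl_adj] at *
  have nac : a ≠ c := by rintro rfl; exact had hcd
  have nad : a ≠ d := by rintro rfl; exact hbd ⟨hab.1.symm, fun h => hab.2 h.symm⟩
  have nbd : b ≠ d := by rintro rfl; exact had hab
  simp only [nac, nad, nbd, ne_eq, not_false_eq_true, true_and, not_not] at hac had hbd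
  exact h c a d b hac.symm had hbd.symm (fun h => hcd.2 h) (fun h => hbc.2 h.symm) hab.2

variable [DecidableEq V]

/-- `s` splits into two nonempty parts with no edges or all edges of `H` between them. -/
def Splits (H : SimpleGraph V) (s : Finset V) : Prop :=
  ∃ A B : Finset V, A.Nonempty ∧ B.Nonempty ∧ Disjoint A B ∧ A ∪ B = s ∧
    ((∀ x ∈ A, ∀ y ∈ B, ¬ H.Adj x y) ∨ ∀ x ∈ A, ∀ y ∈ B, H.Adj x y)

theorem splits_compl_iff {s : Finset V} : Splits Hᶜ s ↔ Splits H s := by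
  refine exists₂_congr fun A B => and_congr_right fun _ => and_congr_right fun _ =>
    and_congr_right fun hd => and_congr_right fun _ => ?_
  have hne : ∀ x ∈ A, ∀ y ∈ B, x ≠ y := fun x hx y hy => Finset.disjoint_iff_ne.1 hd x hx y hy
  rw [or_comm]
  refine or_congr (forall₄_congr fun x hx y hy => ?_) (forall₄_congr fun x hx y hy => ?_) <;>
    simp [hne x hx y hy]

theorem splits_insert_of_disconnected (hH : PathFree H) {v : V} {A B : Finset V} (hA : A.Nonempty)
    (hB : B.Nonempty) (hd : Disjoint A B) (hv : v ∉ A ∪ B)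
    (hAB : ∀ x ∈ A, ∀ y ∈ B, ¬ H.Adj x y) : Splits H (insert v (A ∪ B)) := by
  classical
  by_cases hall : ∀ w ∈ A ∪ B, H.Adj v w
  · exact ⟨{v}, A ∪ B, by simp, hA.mono Finset.subset_union_left, by simpa using hv, rfl,
      .inr (by simpa using hall)⟩
  push Not at hall
  obtain ⟨w, hw, hvw⟩ := hall
  wlog hwA : w ∈ A generalizing A B
  · rw [Finset.union_comm]
    exact this hB hA hd.symm (by rwa [Finset.union_comm])
      (fun x hx y hy h => hAB y hy x hx h.symm) (by rwa [Finset.union_comm])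
      ((Finset.mem_union.1 hw).resolve_left hwA)
  have hvA : v ∉ A := fun h => hv (Finset.mem_union_left _ h)
  have hvB : v ∉ B := fun h => hv (Finset.mem_union_right _ h)
  by_cases hz : ∃ z ∈ B, H.Adj v z
  swap
  · push Not at hz
    refine ⟨insert v A, B, by simp, hB, by simp [hvB, hd], by simp, .inl ?_⟩
    rintro x hx y hy
    rcases Finset.mem_insert.1 hx with rfl | hx
    exacts [hz y hy, hAB x hx y hy]
  obtain ⟨z, hzB, hvz⟩ := hz
  let S := A.filter fun x => ¬ H.Adj v x
  have hS : S ⊆ insert v (A ∪ B) := fun x hx => by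
    simp [(Finset.mem_filter.1 hx).1]
  refine ⟨S, insert v (A ∪ B) \ S, ⟨w, by simp [S, hwA, hvw]⟩, ⟨v, by simp [S, hvA]⟩,
    Finset.disjoint_sdiff, Finset.union_sdiff_of_subset hS, .inl fun x hx y hy hxy => ?_⟩
  obtain ⟨hxA, hvx⟩ := Finset.mem_filter.1 hx
  obtain ⟨hy, hyS⟩ := Finset.mem_sdiff.1 hy
  rcases Finset.mem_insert.1 hy with rfl | hy
  · exact hvx hxy.symm
  rcases Finset.mem_union.1 hy with hyA | hyB
  · have hvy : H.Adj v y := by simpa [S, hyA] using hyS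
    exact hH x y v z hxy hvy.symm hvz (fun h => hvx h.symm) (hAB x hxA z hzB) (hAB y hyA z hzB)
  · exact hAB x hxA y hyB hxy

theorem PathFree.splits (hH : PathFree H) {s : Finset V} (hs : s.Nontrivial) : Splits H s := by
  induction s using Finset.induction_on with
  | empty => simp at hs
  | insert v s hv ih =>
    by_cases hs' : s.Nontrivial
    · obtain ⟨A, B, hA, hB, hd, rfl, h | h⟩ := ih hs'
      · exact splits_insert_of_disconnected hH hA hB hd hv h
      · rw [← splits_compl_iff]
        exact splits_insert_of_disconnected hH.compl hA hB hd hv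
          fun x hx y hy hxy => hxy.2 (h x hx y hy)
    · rw [Finset.Nontrivial, Set.not_nontrivial_iff] at hs'
      obtain ⟨w, rfl⟩ : ∃ w, s = {w} := by
        rcases s.eq_empty_or_nonempty with rfl | ⟨w, hw⟩
        · simp at hs
        · exact ⟨w, Finset.eq_singleton_iff_unique_mem.2 ⟨hw, fun x hx => hs' hx hw⟩⟩
      refine ⟨{v}, {w}, by simp, by simp, by simpa using hv, rfl, ?_⟩
      simpa using (em (H.Adj v w)).symm

theorem PathFree.exists_represents {L : Type*} (hH : PathFree H) (l : V → L) {s : Finset V}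
    (hs : s.Nonempty) : ∃ t : Cotree L, t.Represents H l s := by
  induction s using Finset.strongInduction with
  | H s ih =>
    rcases hs.exists_eq_singleton_or_nontrivial with ⟨v, rfl⟩ | hs
    · exact ⟨.leaf (l v), v, rfl, rfl⟩
    obtain ⟨A, B, hA, hB, hd, rfl, h⟩ := hH.splits hs
    obtain ⟨t, ht⟩ := ih A
      (Finset.ssubset_iff_subset_ne.2 ⟨Finset.subset_union_left, fun e => by
        have := Finset.left_eq_union.1 e
        exact hB.ne_empty (hd.symm.eq_bot_of_le this)⟩) hA
    obtain ⟨u, hu⟩ := ih B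
      (Finset.ssubset_iff_subset_ne.2 ⟨Finset.subset_union_right, fun e => by
        have := Finset.right_eq_union.1 e
        exact hA.ne_empty (hd.eq_bot_of_le this)⟩) hB
    rcases h with h | h
    · exact ⟨.node false t u, A, B, rfl, hd, by simpa using h, ht, hu⟩
    · exact ⟨.node true t u, A, B, rfl, hd, by simpa using h, ht, hu⟩

end Decomposition

/-! ### Bounding the minimal obstructions -/

theorem _root_.IsKProbeCograph.of_embedding {V W : Type*} {k : ℕ} {G : SimpleGraph V}
    {G' : SimpleGraph W} (h : IsKProbeCograph k G') (f : G ↪g G') : IsKProbeCograph k G := by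
  obtain ⟨N, H, hN, hH, hle, hadd⟩ := h
  refine ⟨fun i => f ⁻¹' N i, H.comap f, fun i x hx y hy hxy => ?_, ⟨fun e => ?_⟩,
    fun x y hxy => ?_, fun x y hxy hnot => ?_⟩
  · exact hN i _ hx _ hy (f.map_adj_iff.2 hxy)
  · exact hH.false ((SimpleGraph.Embedding.comap f.toEmbedding H).comp e)
  · exact hle _ _ (f.map_adj_iff.2 hxy)
  · exact hadd _ _ hxy fun h => hnot (f.map_adj_iff.1 h)

/-- `G` is not a `k`-probe cograph, but every smaller induced subgraph of it is one. -/
def IsMinimalObstruction (k : ℕ) {n : ℕ} (G : SimpleGraph (Fin n)) : Prop :=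
  ¬ IsKProbeCograph k G ∧
    ∀ m < n, ∀ G' : SimpleGraph (Fin m), Nonempty (G' ↪g G) → IsKProbeCograph k G'

theorem exists_isMinimalObstruction {k n : ℕ} (G : SimpleGraph (Fin n))
    (hG : ¬ IsKProbeCograph k G) :
    ∃ (m : ℕ) (G' : SimpleGraph (Fin m)), IsMinimalObstruction k G' ∧ Nonempty (G' ↪g G) := by
  induction n using Nat.strong_induction_on with
  | h n ih =>
    by_cases hmin : IsMinimalObstruction k G
    · exact ⟨n, G, hmin, ⟨SimpleGraph.Embedding.refl⟩⟩
    · simp only [IsMinimalObstruction, hG, not_false_eq_true, true_and] at hmin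
      push Not at hmin
      obtain ⟨m, hm, G', ⟨f⟩, hG'⟩ := hmin
      obtain ⟨p, G'', h, ⟨g⟩⟩ := ih m hm G' hG'
      exact ⟨p, G'', h, ⟨f.comp g⟩⟩

/-- The type of labels recording membership in the `k` independent sets and adjacency to a
distinguished vertex. -/
abbrev Label (k : ℕ) : Type := (Fin k → Prop) × Prop

/-- The cotree `t` describes the graph `G`, with vertex `0` recorded through the labels. -/
def Encodes {k m : ℕ} (t : Cotree (Label k)) (G : SimpleGraph (Fin (m + 1))) : Prop :=
  ∃ (H : SimpleGraph (Fin m)) (l : Fin m → Label k),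
    t.Represents H l Finset.univ ∧ (∀ x, (l x).2 ↔ G.Adj 0 x.succ) ∧
    ∀ x y, G.Adj x.succ y.succ ↔ H.Adj x y ∧ ¬ ∃ i, (l x).1 i ∧ (l y).1 i

theorem exists_encodes {k m : ℕ} (hm : 0 < m) {G : SimpleGraph (Fin (m + 1))}
    (hG : IsKProbeCograph k (G.comap Fin.succ)) : ∃ t : Cotree (Label k), Encodes t G := by
  obtain ⟨N, H, hN, hH, hle, hadd⟩ := hG
  have : Nonempty (Fin m) := ⟨⟨0, hm⟩⟩
  obtain ⟨t, ht⟩ := hH.pathFree.exists_represents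
    (fun x => ((fun i => x ∈ N i, G.Adj 0 x.succ) : Label k)) Finset.univ_nonempty
  refine ⟨t, H, _, ht, fun x => Iff.rfl, fun x y => ⟨fun h => ⟨hle x y h, ?_⟩, fun h => ?_⟩⟩
  · rintro ⟨i, hx, hy⟩
    exact hN i x hx y hy h
  · by_contra hxy
    exact h.2 (hadd x y h.1 hxy)

theorem Encodes.nonempty_embedding {k m n : ℕ} {t u : Cotree (Label k)}
    {G : SimpleGraph (Fin (m + 1))} {G' : SimpleGraph (Fin (n + 1))}
    (ht : Encodes t G) (hu : Encodes u G') (h : t.Emb u) : Nonempty (G ↪g G') := by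
  obtain ⟨H, l, htr, hl, hG⟩ := ht
  obtain ⟨H', l', hur, hl', hG'⟩ := hu
  obtain ⟨f, -, hfl, hfi, hfa⟩ := h.exists_map htr hur
  simp only [Finset.mem_univ, forall_const] at hfl hfi hfa
  have hzero : ∀ x, G'.Adj 0 (f x).succ ↔ G.Adj 0 x.succ := fun x => by
    rw [← hl', ← hl, hfl]
  refine ⟨⟨⟨Fin.cases 0 fun x => (f x).succ, fun x y => ?_⟩, fun {x y} => ?_⟩⟩
  · induction x using Fin.cases <;> induction y using Fin.cases
    · simp
    · exact fun e => absurd e.symm (Fin.succ_ne_zero _)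
    · exact fun e => absurd e (Fin.succ_ne_zero _)
    · simpa using hfi _ _
  · induction x using Fin.cases <;> induction y using Fin.cases
    · simp
    · exact hzero _
    · exact (G'.adj_comm _ _).trans ((hzero _).trans (G.adj_comm _ _))
    · refine (hG' _ _).trans ?_
      rw [hG, hfa, hfl, hfl]

theorem exists_bound_isMinimalObstruction (k : ℕ) :
    ∃ B : ℕ, ∀ (n : ℕ) (G : SimpleGraph (Fin n)), IsMinimalObstruction k G → n ≤ B := by
  by_contra! hunb
  have hunb' : ∀ B, ∃ m > B, ∃ G : SimpleGraph (Fin (m + 1)), IsMinimalObstruction k G := by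
    intro B
    obtain ⟨n, G, hG, hn⟩ := hunb (B + 1)
    obtain ⟨m, rfl⟩ := Nat.exists_eq_add_of_le' (by omega : 1 ≤ n)
    exact ⟨m, by omega, G, hG⟩
  obtain ⟨φ, hφ, hP⟩ := Filter.extraction_forall_of_frequently (P := fun B m =>
    0 < m ∧ ∃ G : SimpleGraph (Fin (m + 1)), IsMinimalObstruction k G) fun _ =>
    Filter.frequently_atTop.2 fun B => by
      obtain ⟨m, hm, hG⟩ := hunb' B
      exact ⟨m, hm.le, by omega, hG⟩
  choose hpos G hG using hP
  have henc (i : ℕ) : ∃ t : Cotree (Label k), Encodes t (G i) :=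
    exists_encodes (hpos i) ((hG i).2 _ (Nat.lt_succ_self _) _
      ⟨SimpleGraph.Embedding.comap (Fin.succEmb _) (G i)⟩)
  choose t ht using henc
  obtain ⟨i, j, hij, h⟩ := Cotree.wellQuasiOrdered_emb t
  exact (hG i).1 ((hG j).2 _ (Nat.succ_lt_succ (hφ hij)) _ ((ht i).nonempty_embedding (ht j) h))

end ProbeCograph

open ProbeCograph in
/-- For every `k` there is a finite collection `F` of finite graphs such that a finite
graph `G` is a `k`-probe cograph if and only if no member of `F` embeds into `G`
as an induced subgraph. -/
theorem isKProbeCograph_iff_forbidden_induced_subgraphs (k : ℕ) :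
    ∃ (m : ℕ) (F : Fin m → Σ n : ℕ, SimpleGraph (Fin n)),
      ∀ (V : Type) [Fintype V] (G : SimpleGraph V),
        IsKProbeCograph k G ↔ ∀ j : Fin m, IsEmpty ((F j).2 ↪g G) := by
  classical
  obtain ⟨B, hB⟩ := exists_bound_isMinimalObstruction k
  let T := {p : Σ n : Fin (B + 1), SimpleGraph (Fin n) // ¬ IsKProbeCograph k p.2}
  obtain ⟨m, ⟨e⟩⟩ := Finite.exists_equiv_fin T
  refine ⟨m, fun j => ⟨(e.symm j).1.1, (e.symm j).1.2⟩, fun V _ G => ⟨fun hG j => ⟨fun f => ?_⟩,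
    fun hF => ?_⟩⟩
  · exact (e.symm j).2 (hG.of_embedding f)
  · by_contra hG
    let φ := G.overFinIso rfl
    obtain ⟨n, G', hmin, ⟨g⟩⟩ := exists_isMinimalObstruction (k := k) (G.overFin rfl)
      fun h => hG (h.of_embedding φ.toEmbedding)
    have hn := Nat.lt_succ_of_le (hB n G' hmin)
    let p : T := ⟨⟨⟨n, hn⟩, G'⟩, hmin.1⟩
    have hforall : ∀ q : T, IsEmpty (q.1.2 ↪g G) := e.symm.surjective.forall.2 hF
    exact (hforall p).false (φ.symm.toEmbedding.comp g)
end

section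
/- There exists a function f : ℕ → ℕ such that for every natural number k and every k-probe cograph G, every induced path in G has at most f(k) vertices. (An induced path in G is a subset of vertices whose induced subgraph is isomorphic to a path.) -/
/-- The vertex set `P` splits into two nonempty parts that are completely joined in `H`. -/
def IsJoinSet {V : Type*} (H : SimpleGraph V) (P : Set V) : Prop :=
  ∃ A B : Set V, A.Nonempty ∧ B.Nonempty ∧ A ∪ B = P ∧ ∀ a ∈ A, ∀ b ∈ B, H.Adj a b

/-- Elementwise form of `P₄`-freeness; distinctness of the vertices is automatic. -/
def P4Free {V : Type*} (H : SimpleGraph V) : Prop :=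
  ∀ a b c d, H.Adj a b → H.Adj b c → H.Adj c d →
    ¬ H.Adj a c → ¬ H.Adj b d → ¬ H.Adj a d → False

theorem IsCograph.p4Free {V : Type*} {H : SimpleGraph V} (hH : IsCograph H) : P4Free H := by
  intro a b c d hab hbc hcd hac hbd had
  have nab := hab.ne
  have nbc := hbc.ne
  have ncd := hcd.ne
  have nac : a ≠ c := by rintro rfl; exact had hcd
  have nbd : b ≠ d := by rintro rfl; exact had hab
  have nad : a ≠ d := by rintro rfl; exact hbd hab.symm
  refine hH.false ⟨⟨![a, b, c, d], ?_⟩, ?_⟩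
  · intro i j hij
    fin_cases i <;> fin_cases j <;> simp_all
  · intro i j
    change H.Adj (![a, b, c, d] i) (![a, b, c, d] j) ↔ _
    fin_cases i <;> fin_cases j <;>
      simp [SimpleGraph.pathGraph_adj, hab, hbc, hcd, hac, hbd, had, hab.symm, hbc.symm,
        hcd.symm, mt SimpleGraph.Adj.symm hac, mt SimpleGraph.Adj.symm hbd,
        mt SimpleGraph.Adj.symm had]

theorem P4Free.comap {V W : Type*} {H : SimpleGraph V} (hH : P4Free H) (p : W → V) :
    P4Free (H.comap p) :=
  fun a b c d => hH (p a) (p b) (p c) (p d)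

/-- Adding a non-isolated vertex to a join in a `P₄`-free graph yields a join. -/
theorem IsJoinSet.insert_of_adj {V : Type*} {H : SimpleGraph V} (hH : P4Free H) {P : Set V}
    (hP : IsJoinSet H P) {v w : V} (hw : w ∈ P) (hwv : H.Adj w v) :
    IsJoinSet H (insert v P) := by
  obtain ⟨A, B, hA, hB, rfl, hAB⟩ := hP
  wlog hwA : w ∈ A generalizing A B
  · rw [Set.union_comm]
    exact this B A hB hA (fun a ha b hb => (hAB b hb a ha).symm) (by rwa [Set.union_comm])
      (hw.resolve_left hwA)
  by_cases hvB : ∀ b ∈ B, H.Adj v b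
  · refine ⟨insert v A, B, Set.insert_nonempty _ _, hB, Set.insert_union, ?_⟩
    rintro a (rfl | ha) b hb
    · exact hvB b hb
    · exact hAB a ha b hb
  · push Not at hvB
    obtain ⟨z, hz, hvz⟩ := hvB
    refine ⟨{x ∈ A | H.Adj x v}, insert v ({x ∈ A | ¬ H.Adj x v} ∪ B), ⟨w, hwA, hwv⟩,
      Set.insert_nonempty _ _, ?_, ?_⟩
    · ext x
      simp only [Set.mem_union, Set.mem_insert_iff, Set.mem_ofPred_eq]
      tauto
    · rintro y ⟨hy, hyv⟩ b (rfl | ⟨hb, hbv⟩ | hb)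
      · exact hyv
      · by_contra hyb
        exact hH b z y v (hAB b hb z hz) (hAB y hy z hz).symm hyv
          (fun h => hyb h.symm) (fun h => hvz h.symm) hbv
      · exact hAB y hy b hb

theorem isJoinSet_Ico {H : SimpleGraph ℕ} (hH : P4Free H) (s m : ℕ)
    (hpath : ∀ i, s ≤ i → i + 1 < s + (m + 2) → H.Adj i (i + 1)) :
    IsJoinSet H (Set.Ico s (s + (m + 2))) := by
  induction m with
  | zero =>
    refine ⟨{s}, {s + 1}, Set.singleton_nonempty _, Set.singleton_nonempty _, ?_, ?_⟩
    · ext x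
      simp only [Set.mem_union, Set.mem_singleton_iff, Set.mem_Ico]
      omega
    · rintro a rfl b rfl
      exact hpath _ le_rfl (by omega)
  | succ m ih =>
    have hins : Set.Ico s (s + (m + 1 + 2)) =
        insert (s + (m + 1) + 1) (Set.Ico s (s + (m + 2))) := by
      ext x
      simp only [Set.mem_insert_iff, Set.mem_Ico]
      omega
    rw [hins]
    exact (ih fun i h₁ h₂ => hpath i h₁ (by omega)).insert_of_adj hH (w := s + (m + 1))
      ⟨by omega, by omega⟩ (hpath _ (by omega) (by omega))

/-- If a predicate is not constant on an interval but constant (true) on a subinterval of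
length `M`, then some run of length `M` is followed or preceded by a point where it fails. -/
theorem exists_run_next_to_failure {A : ℕ → Prop} {s N t M y : ℕ} (hM : 0 < M) (hst : s ≤ t)
    (htN : t + M ≤ s + N) (hrun : ∀ i, t ≤ i → i < t + M → A i)
    (hsy : s ≤ y) (hyN : y < s + N) (hy : ¬ A y) :
    ∃ u b, s ≤ u ∧ u + M ≤ s + N ∧ (∀ i, u ≤ i → i < u + M → A i) ∧
      s ≤ b ∧ b < s + N ∧ ¬ A b ∧ (b = u + M ∨ b + 1 = u) := by
  classical
  rcases lt_or_ge y t with hyt | hty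
  · have hex : ∃ d, ¬ A (t - 1 - d) := ⟨t - 1 - y, by rwa [show t - 1 - (t - 1 - y) = y by omega]⟩
    have hle : Nat.find hex ≤ t - 1 - y :=
      Nat.find_min' hex (by rwa [show t - 1 - (t - 1 - y) = y by omega])
    refine ⟨t - Nat.find hex, t - 1 - Nat.find hex, by omega, by omega, ?_, by omega, by omega,
      Nat.find_spec hex, by omega⟩
    intro i h₁ h₂
    by_cases hi : t ≤ i
    · exact hrun i hi (by omega)
    · by_contra hAi
      refine Nat.find_min hex (m := t - 1 - i) (by omega) ?_
      rwa [show t - 1 - (t - 1 - i) = i by omega]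
  · have hex : ∃ d, ¬ A (t + d) := ⟨y - t, by rwa [show t + (y - t) = y by omega]⟩
    have hle : Nat.find hex ≤ y - t :=
      Nat.find_min' hex (by rwa [show t + (y - t) = y by omega])
    have hge : M ≤ Nat.find hex := by
      by_contra hlt
      exact Nat.find_spec hex (hrun _ (by omega) (by omega))
    refine ⟨t + Nat.find hex - M, t + Nat.find hex, by omega, by omega, ?_, by omega, by omega,
      Nat.find_spec hex, by omega⟩
    intro i h₁ h₂
    by_contra hAi
    refine Nat.find_min hex (m := i - t) (by omega) ?_
    rwa [show t + (i - t) = i by omega]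

/-- `H` is a graph on `ℕ` which, restricted to pairs with disjoint labels, is the path
on `0, …, n - 1`. -/
structure IsLabelledPath {k : ℕ} (H : SimpleGraph ℕ) (L : ℕ → Finset (Fin k)) (n : ℕ) :
    Prop where
  adj_succ : ∀ i, i + 1 < n → H.Adj i (i + 1)
  disjoint_succ : ∀ i, i + 1 < n → Disjoint (L i) (L (i + 1))
  consecutive : ∀ i j, i < n → j < n → H.Adj i j → Disjoint (L i) (L j) → i + 1 = j ∨ j + 1 = i

/-- In a long labelled path split into two completely joined parts, some run of length `M`
lies within one part. -/
theorem IsLabelledPath.exists_run {k : ℕ} {H : SimpleGraph ℕ} {L : ℕ → Finset (Fin k)} {n : ℕ}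
    (hL : IsLabelledPath H L n) {s M : ℕ}
    (hn : s + (2 ^ k + 1) * (M + 2) ≤ n) {A B : Set ℕ}
    (hU : A ∪ B = Set.Ico s (s + (2 ^ k + 1) * (M + 2)))
    (hAB : ∀ a ∈ A, ∀ b ∈ B, H.Adj a b) :
    ∃ t, s ≤ t ∧ t + M ≤ s + (2 ^ k + 1) * (M + 2) ∧
      ((∀ i, t ≤ i → i < t + M → i ∈ A) ∨ (∀ i, t ≤ i → i < t + M → i ∈ B)) := by
  by_contra! hno
  have hblock : ∀ j : Fin (2 ^ k + 1),
      s + j * (M + 2) + (M + 2) ≤ s + (2 ^ k + 1) * (M + 2) := by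
    intro j
    have := Nat.mul_le_mul_right (M + 2) (Nat.succ_le_of_lt j.2)
    rw [Nat.succ_mul] at this
    omega
  have hcross : ∀ j : Fin (2 ^ k + 1), ∃ u v, u ∈ A ∧ v ∈ B ∧ Disjoint (L u) (L v) ∧
      s + j * (M + 2) ≤ u ∧ u < s + j * (M + 2) + M ∧
      s + j * (M + 2) ≤ v ∧ v < s + j * (M + 2) + M := by
    intro j
    have hj := hblock j
    obtain ⟨⟨x, hx₁, hx₂, hxA⟩, y, hy₁, hy₂, hyB⟩ :=
      hno (s + j * (M + 2)) (by omega) (by omega)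
    have hcov : ∀ i, s + j * (M + 2) ≤ i → i < s + j * (M + 2) + M → i ∈ A ∨ i ∈ B := by
      intro i h₁ h₂
      have : i ∈ A ∪ B := by rw [hU]; exact ⟨by omega, by omega⟩
      exact this
    by_contra! hnc
    have hconst : ∀ d, s + j * (M + 2) + d < s + j * (M + 2) + M →
        (s + j * (M + 2) + d ∈ A ↔ s + j * (M + 2) ∈ A) := by
      intro d
      induction d with
      | zero => simp
      | succ d ih =>
        intro hd
        rw [← ih (by omega)]
        have hdis := hL.disjoint_succ (s + j * (M + 2) + d) (by omega)
        constructor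
        · intro h
          by_contra h'
          have hB := (hcov (s + j * (M + 2) + d) (by omega) (by omega)).resolve_left h'
          have := hnc _ _ h hB hdis.symm (by omega) (by omega) (by omega)
          omega
        · intro h
          by_contra h'
          have hB := (hcov (s + j * (M + 2) + (d + 1)) (by omega) (by omega)).resolve_left h'
          have := hnc _ _ h hB hdis (by omega) (by omega) (by omega)
          omega
    have hyA := (hcov y hy₁ hy₂).resolve_right hyB
    have h₁ := hconst (x - (s + j * (M + 2))) (by omega)
    have h₂ := hconst (y - (s + j * (M + 2))) (by omega)
    rw [Nat.add_sub_cancel' hx₁] at h₁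
    rw [Nat.add_sub_cancel' hy₁] at h₂
    exact hxA (h₁.2 (h₂.1 hyA))
  choose u v huA hvB hdis hu₁ hu₂ hv₁ hv₂ using hcross
  obtain ⟨i, j, hij, hLij⟩ := Fintype.exists_ne_map_eq_of_card_lt (fun j => L (u j))
    (by simp)
  have hcons := hL.consecutive (u i) (v j)
    (by have := hblock i; have := hu₂ i; omega) (by have := hblock j; have := hv₂ j; omega)
    (hAB _ (huA i) _ (hvB j))
    (by have : L (u i) = L (u j) := hLij
        rw [this]; exact hdis j)
  have := hu₁ i
  have := hu₂ i
  have := hv₁ j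
  have := hv₂ j
  rcases lt_or_gt_of_ne (Fin.val_ne_of_ne hij) with h | h
  · have := Nat.mul_le_mul_right (M + 2) (Nat.succ_le_of_lt h)
    rw [Nat.succ_mul] at this
    omega
  · have := Nat.mul_le_mul_right (M + 2) (Nat.succ_le_of_lt h)
    rw [Nat.succ_mul] at this
    omega

/-- A bound on the length of a labelled path all of whose labels meet all but `r` of the
subsets of `Fin k`. -/
def labelledPathBound (k : ℕ) : ℕ → ℕ
  | 0 => 2
  | r + 1 => (2 ^ k + 1) * (labelledPathBound k r + 1 + 2)

theorem IsLabelledPath.false_of_bound_le {k : ℕ} {H : SimpleGraph ℕ} {L : ℕ → Finset (Fin k)}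
    {n : ℕ} (hH : P4Free H) (hL : IsLabelledPath H L n) (r s : ℕ)
    (hn : s + labelledPathBound k r ≤ n) (T : Finset (Finset (Fin k)))
    (hT : 2 ^ k ≤ T.card + r)
    (hmeet : ∀ i, s ≤ i → i < s + labelledPathBound k r → ∀ t ∈ T, ¬ Disjoint (L i) t) :
    False := by
  induction r generalizing s T with
  | zero =>
    rw [labelledPathBound] at hn hmeet
    have hTu : T = Finset.univ := by
      rw [← Finset.card_eq_iff_eq_univ]
      refine le_antisymm (Finset.card_le_univ T) ?_
      simpa using hT
    exact hmeet s le_rfl (by omega) (L (s + 1)) (by simp [hTu]) (hL.disjoint_succ s (by omega))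
  | succ r ih =>
    rw [labelledPathBound] at hn hmeet
    set g := labelledPathBound k r
    set N := (2 ^ k + 1) * (g + 1 + 2) with hN
    have hN2 : 2 ≤ N := by
      have := Nat.mul_le_mul_right (g + 1 + 2) (Nat.le_add_left 1 (2 ^ k))
      omega
    obtain ⟨A, B, ⟨x, hx⟩, ⟨y, hy⟩, hU, hAB⟩ : IsJoinSet H (Set.Ico s (s + N)) := by
      have := isJoinSet_Ico hH s (N - 2) fun i _ h₂ => hL.adj_succ i (by omega)
      rwa [Nat.sub_add_cancel hN2] at this
    obtain ⟨t, hst, htN, hrun⟩ := hL.exists_run (M := g + 1) hn hU hAB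
    wlog hA : ∀ i, t ≤ i → i < t + (g + 1) → i ∈ A generalizing A B x y
    · exact this B A y hy x hx (by rwa [Set.union_comm])
        (fun b hb a ha => (hAB a ha b hb).symm) hrun.symm (hrun.resolve_left hA)
    have hyI : y ∈ Set.Ico s (s + N) := hU ▸ Or.inr hy
    have hyA : y ∉ A := fun h => H.irrefl (hAB y h y hy)
    obtain ⟨u, b, hsu, huN, hrunA, hsb, hbN, hbA, hub⟩ :=
      exists_run_next_to_failure (A := (· ∈ A)) (Nat.add_one_pos g) hst htN hA hyI.1 hyI.2 hyA
    have hbB : b ∈ B := by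
      have : b ∈ A ∪ B := by rw [hU]; exact ⟨hsb, hbN⟩
      exact this.resolve_left hbA
    have hbT : L b ∉ T := by
      intro hb
      rcases hub with rfl | rfl
      · exact hmeet (u + g) (by omega) (by omega) _ hb (hL.disjoint_succ (u + g) (by omega))
      · exact hmeet (b + 1) (by omega) (by omega) _ hb (hL.disjoint_succ b (by omega)).symm
    -- the part of the run that is not adjacent to `b` in the path
    obtain ⟨c, huc, hcu, hfar⟩ : ∃ c, u ≤ c ∧ c ≤ u + 1 ∧
        ∀ i, c ≤ i → i < c + g → i + 1 ≠ b ∧ b + 1 ≠ i := by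
      rcases hub with rfl | rfl
      · exact ⟨u, le_rfl, by omega, fun i h₁ h₂ => by omega⟩
      · exact ⟨b + 2, by omega, by omega, fun i h₁ h₂ => by omega⟩
    refine ih c (by omega) (insert (L b) T) ?_ ?_
    · rw [Finset.card_insert_of_notMem hbT]
      omega
    · intro i h₁ h₂ l hl
      rcases Finset.mem_insert.1 hl with rfl | hl
      · intro hdis
        have hadj := hAB i (hrunA i (by omega) (by omega)) b hbB
        have := hL.consecutive i b (by omega) (by omega) hadj hdis
        have := hfar i h₁ h₂
        omega
      · exact hmeet i (by omega) (by omega) l hl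

/-- There is a function `f` such that in every `k`-probe cograph, every induced path
(a vertex subset whose induced subgraph is isomorphic to a path graph) has at most
`f k` vertices. -/
theorem induced_path_length_bound :
    ∃ f : ℕ → ℕ, ∀ (k : ℕ) (V : Type) [Fintype V] (G : SimpleGraph V),
      IsKProbeCograph k G →
        ∀ (W : Set V) (n : ℕ),
          Nonempty (G.induce W ≃g SimpleGraph.pathGraph n) → n ≤ f k := by
  classical
  refine ⟨fun k => labelledPathBound k (2 ^ k), ?_⟩
  rintro k V _ G ⟨N, H, hN, hH, hGH, hHG⟩ W n ⟨e⟩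
  by_contra! hn
  have hn0 : 0 < n := by omega
  let p : ℕ → V := fun i => if h : i < n then (e.symm ⟨i, h⟩ : V) else e.symm ⟨0, hn0⟩
  let L : ℕ → Finset (Fin k) := fun i => {l | p i ∈ N l}
  have hp : ∀ i j, i < n → j < n → (G.Adj (p i) (p j) ↔ i + 1 = j ∨ j + 1 = i) := by
    intro i j hi hj
    have := e.symm.map_adj_iff (v := ⟨i, hi⟩) (w := ⟨j, hj⟩)
    simpa [p, hi, hj, SimpleGraph.pathGraph_adj] using this
  have hdis : ∀ i j, G.Adj (p i) (p j) → Disjoint (L i) (L j) := by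
    intro i j h
    rw [Finset.disjoint_left]
    intro l h₁ h₂
    simp only [L, Finset.mem_filter, Finset.mem_univ, true_and] at h₁ h₂
    exact hN l _ h₁ _ h₂ h
  have hL : IsLabelledPath (H.comap p) L n :=
    { adj_succ := fun i hi => hGH _ _ ((hp i (i + 1) (by omega) hi).2 (Or.inl rfl))
      disjoint_succ := fun i hi => hdis _ _ ((hp i (i + 1) (by omega) hi).2 (Or.inl rfl))
      consecutive := by
        intro i j hi hj hadj hd
        rw [← hp i j hi hj]
        by_contra hG
        obtain ⟨l, h₁, h₂⟩ := hHG _ _ hadj hG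
        have hl₁ : l ∈ L i := by simpa [L] using h₁
        have hl₂ : l ∈ L j := by simpa [L] using h₂
        exact Finset.disjoint_left.1 hd hl₁ hl₂ }
  exact hL.false_of_bound_le (hH.p4Free.comap p) (2 ^ k) 0 (by omega) ∅ (by simp) (by simp)
end

section
/- A finite simple graph with at least two vertices is a cograph if and only if it has a twin, i.e., two distinct vertices x and y such that every vertex z distinct from x and y is adjacent to x exactly when it is adjacent to y, and moreover the graph obtained by deleting y is a cograph. -/
/-- A graph is a cograph if and only if no four vertices `a, b, c, d` induce the path `a b c d`;
distinctness of the vertices is automatic. -/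
theorem isCograph_iff_forall {V : Type*} (G : SimpleGraph V) :
    IsCograph G ↔ ∀ a b c d, G.Adj a b → G.Adj b c → G.Adj c d →
      ¬ G.Adj a c → ¬ G.Adj b d → G.Adj a d := by
  constructor
  · intro h a b c d hab hbc hcd hac hbd
    by_contra had
    have hdist : a ≠ b ∧ a ≠ c ∧ a ≠ d ∧ b ≠ c ∧ b ≠ d ∧ c ≠ d := by
      refine ⟨hab.ne, ?_, ?_, hbc.ne, ?_, hcd.ne⟩ <;> rintro rfl
      exacts [had hcd, hac hcd.symm, had hab]
    refine h.false ⟨⟨![a, b, c, d], ?_⟩, ?_⟩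
    · intro i j hij
      fin_cases i <;> fin_cases j <;> simp_all
    · have hca : ¬ G.Adj c a := fun e => hac e.symm
      have hdb : ¬ G.Adj d b := fun e => hbd e.symm
      have hda : ¬ G.Adj d a := fun e => had e.symm
      have key : ∀ i j, G.Adj (![a, b, c, d] i) (![a, b, c, d] j) ↔
          (SimpleGraph.pathGraph 4).Adj i j := by
        simp [Fin.forall_fin_succ, SimpleGraph.pathGraph_adj, hab, hab.symm, hbc, hbc.symm,
          hcd, hcd.symm, hac, hbd, had, hca, hdb, hda]
      exact fun {i j} => key i j
  · intro h
    refine ⟨fun f => ?_⟩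
    have key : ∀ i j, G.Adj (f i) (f j) ↔ (SimpleGraph.pathGraph 4).Adj i j :=
      fun i j => f.map_rel_iff
    have := h (f 0) (f 1) (f 2) (f 3)
    simp [key, SimpleGraph.pathGraph_adj] at this

/-- The complement of a cograph is a cograph. -/
theorem IsCograph.compl_s8 {V : Type*} {G : SimpleGraph V} (h : IsCograph G) : IsCograph Gᶜ := by
  rw [isCograph_iff_forall] at h ⊢
  intro a b c d
  have := h c a d b
  simp only [SimpleGraph.compl_adj]
  grind [G.adj_comm]

/-- The vertex set `S` has a proper nonempty part `A` with no edges from `A` to `S \ A`. -/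
def SimpleGraph.Separates {V : Type*} (G : SimpleGraph V) (S : Finset V) : Prop :=
  ∃ A ⊆ S, A.Nonempty ∧ A ≠ S ∧ ∀ a ∈ A, ∀ b ∈ S, b ∉ A → ¬ G.Adj a b

/-- Adding a vertex to a separated set of vertices of a cograph leaves the set separated,
in the graph or in its complement. -/
theorem IsCograph.separates_insert {V : Type*} [DecidableEq V] {G : SimpleGraph V}
    (h : IsCograph G) {S : Finset V} {v : V} (hv : v ∉ S) (hS : G.Separates S) :
    G.Separates (insert v S) ∨ Gᶜ.Separates (insert v S) := by
  classical
  rw [isCograph_iff_forall] at h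
  by_cases hall : ∀ u ∈ S, G.Adj v u
  · right
    obtain ⟨A, hAS, ⟨a, ha⟩, -⟩ := hS
    refine ⟨{v}, by simp, by simp, ?_, ?_⟩
    · intro he
      have : a ∈ ({v} : Finset V) := he ▸ Finset.mem_insert_of_mem (hAS ha)
      grind
    · simp only [SimpleGraph.compl_adj]
      grind
  left
  push Not at hall
  obtain ⟨u, hu, hvu⟩ := hall
  let P : Finset V → Prop := fun A =>
    A ⊆ S ∧ u ∈ A ∧ ∀ a ∈ A, ∀ b ∈ S, b ∉ A → ¬ G.Adj a b
  have hP : ∃ A, P A ∧ A ≠ S := by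
    obtain ⟨A, hAS, ⟨a, ha⟩, hne, hA⟩ := hS
    by_cases huA : u ∈ A
    · exact ⟨A, ⟨hAS, huA, hA⟩, hne⟩
    · refine ⟨S \ A, ⟨Finset.sdiff_subset, by grind, ?_⟩, by grind⟩
      grind [G.adj_comm]
  obtain ⟨A₀, hA₀, hne₀⟩ := hP
  obtain ⟨A, hle, ⟨hAS, huA, hA⟩, hmin⟩ := exists_minimal_le_of_wellFoundedLT P A₀ hA₀
  have hne : ∃ w ∈ S, w ∉ A := by
    by_contra! hc
    exact hne₀ (Finset.Subset.antisymm hA₀.1 fun x hx => hle (hc x hx))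
  by_cases hvA : ∀ a ∈ A, ¬ G.Adj v a
  · exact ⟨A, by grind, ⟨u, huA⟩, by grind, by grind [G.adj_comm]⟩
  -- minimality of `A` yields an edge `p q` inside `A` with exactly `q` adjacent to `v`
  have hedge : ∃ p ∈ A, ∃ q ∈ A, G.Adj p q ∧ ¬ G.Adj v p ∧ G.Adj v q := by
    by_contra! hc
    have hsub := hmin (y := A.filter fun a => ¬ G.Adj v a) ⟨by grind, by grind, by grind⟩
      (Finset.filter_subset _ _)
    exact hvA fun a ha => (Finset.mem_filter.1 (hsub ha)).2
  obtain ⟨p, hp, q, hq, hpq, hvp, hvq⟩ := hedge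
  have hne' : S \ A ≠ insert v S := by
    intro he
    have hmem : v ∈ S \ A := he ▸ Finset.mem_insert_self v S
    exact hv (Finset.mem_sdiff.1 hmem).1
  refine ⟨S \ A, by grind, by grind [Finset.Nonempty], hne', ?_⟩
  intro c hc b hb hbA hcb
  obtain ⟨hcS, hcA⟩ := Finset.mem_sdiff.1 hc
  rcases Finset.mem_insert.1 hb with rfl | hbS
  · exact hA p hp c hcS hcA
      (h p q b c hpq hvq.symm hcb.symm (fun e => hvp e.symm) (hA q hq c hcS hcA))
  · have hb' : b ∈ A := by
      by_contra hn
      exact hbA (Finset.mem_sdiff.2 ⟨hbS, hn⟩)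
    exact hA b hb' c hcS hcA hcb.symm

/-- Every set of at least two vertices of a cograph is separated in the graph
or in its complement. -/
theorem IsCograph.separates {V : Type*} {G : SimpleGraph V} (h : IsCograph G) (S : Finset V)
    (hS : S.Nontrivial) : G.Separates S ∨ Gᶜ.Separates S := by
  classical
  induction S using Finset.induction_on with
  | empty => simp at hS
  | insert v S hv ih =>
    by_cases hnt : S.Nontrivial
    · rcases ih hnt with hs | hs
      · exact h.separates_insert hv hs
      · have := h.compl_s8.separates_insert hv hs
        rwa [compl_compl, or_comm] at this
    · have hne : S.Nonempty := by
        rw [Finset.nonempty_iff_ne_empty]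
        rintro rfl
        simp at hS
      obtain ⟨w, rfl⟩ := hne.exists_eq_singleton_or_nontrivial.resolve_right hnt
      have hvw : v ≠ w := by simpa using hv
      by_cases hadj : G.Adj v w
      · right
        refine ⟨{v}, by simp, by simp, by grind, ?_⟩
        simp only [SimpleGraph.compl_adj]
        grind
      · left
        exact ⟨{v}, by simp, by simp, by grind, by grind⟩

/-- Every set of at least two vertices of a cograph contains two vertices that are twins in the
subgraph induced by the set. -/
theorem IsCograph.exists_twins {V : Type*} {G : SimpleGraph V} (h : IsCograph G) (S : Finset V)
    (hS : S.Nontrivial) :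
    ∃ x ∈ S, ∃ y ∈ S, x ≠ y ∧ ∀ z ∈ S, z ≠ x → z ≠ y → (G.Adj z x ↔ G.Adj z y) := by
  classical
  induction S using Finset.strongInduction with
  | H S ih =>
    have hsplit : ∃ A ⊆ S, A.Nonempty ∧ A ≠ S ∧
        ∀ a ∈ A, ∀ a' ∈ A, ∀ b ∈ S, b ∉ A → ∀ b' ∈ S, b' ∉ A → (G.Adj a b ↔ G.Adj a' b') := by
      rcases h.separates S hS with ⟨A, hAS, hne, hAne, hA⟩ | ⟨A, hAS, hne, hAne, hA⟩
      · exact ⟨A, hAS, hne, hAne, by grind⟩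
      · simp only [SimpleGraph.compl_adj] at hA
        exact ⟨A, hAS, hne, hAne, by grind⟩
    obtain ⟨A, hAS, hne, hAne, hA⟩ := hsplit
    have hcompl : (S \ A).Nonempty := by
      rw [Finset.sdiff_nonempty]
      exact fun hle => hAne (hAS.antisymm hle)
    rcases hne.exists_eq_singleton_or_nontrivial with ⟨a, rfl⟩ | hnt
    · rcases hcompl.exists_eq_singleton_or_nontrivial with ⟨b, hb⟩ | hnt
      · have hbS : b ∈ S \ {a} := by simp [hb]
        have hmem : ∀ z ∈ S, z ≠ a → z = b := by
          intro z hz hza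
          have : z ∈ S \ {a} := by simp [hz, hza]
          simpa [hb] using this
        exact ⟨a, by grind, b, by grind, by grind, by grind⟩
      · obtain ⟨x, hx, y, hy, hxy, htw⟩ := ih (S \ {a}) (Finset.sdiff_ssubset hAS hne) hnt
        exact ⟨x, by grind, y, by grind, hxy, by grind⟩
    · obtain ⟨x, hx, y, hy, hxy, htw⟩ := ih A (hAS.ssubset_of_ne hAne) hnt
      exact ⟨x, hAS hx, y, hAS hy, hxy, by grind [G.adj_comm]⟩

/-- A graph with twins `x`, `y` is a cograph if deleting `y` leaves a cograph. -/
theorem isCograph_of_twins {V : Type*} {G : SimpleGraph V} {x y : V} (hxy : x ≠ y)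
    (htw : ∀ z : V, z ≠ x → z ≠ y → (G.Adj z x ↔ G.Adj z y))
    (h : IsCograph (G.induce {z : V | z ≠ y})) : IsCograph G := by
  rw [isCograph_iff_forall] at h ⊢
  have h' : ∀ a b c d, a ≠ y → b ≠ y → c ≠ y → d ≠ y → G.Adj a b → G.Adj b c → G.Adj c d →
      ¬ G.Adj a c → ¬ G.Adj b d → G.Adj a d :=
    fun a b c d ha hb hc hd => h ⟨a, ha⟩ ⟨b, hb⟩ ⟨c, hc⟩ ⟨d, hd⟩
  intro a b c d hab hbc hcd hac hbd
  by_contra had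
  have hdist : a ≠ b ∧ a ≠ c ∧ a ≠ d ∧ b ≠ c ∧ b ≠ d ∧ c ≠ d := by
    refine ⟨hab.ne, ?_, ?_, hbc.ne, ?_, hcd.ne⟩ <;> rintro rfl
    exacts [had hcd, hac hcd.symm, had hab]
  have ha := htw a
  have hb := htw b
  have hc := htw c
  have hd := htw d
  by_cases hay : a = y
  · have := h' x b c d
    clear h h' htw
    grind [G.adj_comm]
  by_cases hby : b = y
  · have := h' a x c d
    clear h h' htw
    grind [G.adj_comm]
  by_cases hcy : c = y
  · have := h' a b x d
    clear h h' htw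
    grind [G.adj_comm]
  by_cases hdy : d = y
  · have := h' a b c x
    clear h h' htw
    grind [G.adj_comm]
  exact had (h' a b c d hay hby hcy hdy hab hbc hcd hac hbd)

/-- A finite simple graph with at least two vertices is a cograph if and only if it has a
pair of twins `x ≠ y` and deleting `y` leaves a cograph. -/
theorem cograph_iff_twin_and_delete
    {V : Type*} [Fintype V] [Nontrivial V] (G : SimpleGraph V) :
    IsCograph G ↔
      ∃ x y : V, x ≠ y ∧
        (∀ z : V, z ≠ x → z ≠ y → (G.Adj z x ↔ G.Adj z y)) ∧
        IsCograph (G.induce {z : V | z ≠ y}) := by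
  constructor
  · intro h
    obtain ⟨x, -, y, -, hxy, htw⟩ := h.exists_twins Finset.univ Finset.univ_nontrivial
    refine ⟨x, y, hxy, fun z => htw z (Finset.mem_univ z), ⟨fun f => ?_⟩⟩
    exact h.false (f.trans (SimpleGraph.Embedding.induce _))
  · rintro ⟨x, y, hxy, htw, h⟩
    exact isCograph_of_twins hxy htw h
end
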